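/- arXiv:1809.06739 — 2 statements merged into one kernel-verified Lean document; each statement's English description precedes it below -/
import Mathlib

section
/- Let f : ℝ → ℝ be four times continuously differentiable and let x ∈ ℝ. Then (1/h)·(−(1/6) f(x + 2h) + f(x + h) − (1/2) f(x) − (1/3) f(x − h)) = f′(x) + O(h³) as h → 0; that is, there exist constants C > 0 and δ > 0 such that for all 0 < |h| < δ, |(1/h)(−(1/6)f(x+2h) + f(x+h) − (1/2)f(x) − (1/3)f(x−h)) − f′(x)| ≤ C h³. -/
/-!
The weights `-1/6, 1, -1/2, -1/3` at the offsets `2, 1, 0, -1` have moments `0, 1, 0, 0` of orders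
`0, 1, 2, 3`, so the combination annihilates the constant, quadratic and cubic terms of the Taylor
expansion of `f` at `x` and returns `f'(x) h` from the linear one. What remains is bounded by the
Taylor remainder `O(h⁴)` of `exists_cubic_taylor_bound`, and dividing by `h` leaves `O(h³)`.
-/

/-- Local third-order Taylor expansion with a fourth-order remainder; only the linear coefficient
needs to be identified, so those of degree two and three are left existential. -/
lemma exists_cubic_taylor_bound (f : ℝ → ℝ) (hf : ContDiff ℝ 4 f) (x : ℝ) :
    ∃ b c : ℝ, ∃ K > (0 : ℝ), ∃ δ > (0 : ℝ), ∀ t : ℝ, |t| < δ →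
      |f (x + t) - (f x + deriv f x * t + b * t ^ 2 + c * t ^ 3)| ≤ K * |t| ^ 4 := by
  have ho := (taylor_isLittleO_univ (x₀ := x) (n := 4) hf).bound (c := 1) one_pos
  obtain ⟨δ, hδ, H⟩ := Metric.eventually_nhds_iff.1 ho
  refine ⟨iteratedDeriv 2 f x / 2, iteratedDeriv 3 f x / 6, |iteratedDeriv 4 f x / 24| + 1,
    by positivity, δ, hδ, fun t ht => ?_⟩
  have h := @H (x + t) (by simpa [Real.dist_eq] using ht)
  simp only [taylor_within_apply, Finset.sum_range_succ, Finset.sum_range_zero,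
    iteratedDerivWithin_univ, iteratedDeriv_zero, iteratedDeriv_one, Nat.factorial,
    add_sub_cancel_left, smul_eq_mul, Real.norm_eq_abs, abs_pow, one_mul] at h
  -- The quartic Taylor term is absorbed into the remainder.
  have key := abs_add_le
    (f (x + t) - (f x + deriv f x * t + iteratedDeriv 2 f x / 2 * t ^ 2
      + iteratedDeriv 3 f x / 6 * t ^ 3) - iteratedDeriv 4 f x / 24 * t ^ 4)
    (iteratedDeriv 4 f x / 24 * t ^ 4)
  rw [sub_add_cancel, abs_mul _ (t ^ 4), abs_pow] at key
  have e : f (x + t) - (f x + deriv f x * t + iteratedDeriv 2 f x / 2 * t ^ 2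
      + iteratedDeriv 3 f x / 6 * t ^ 3) - iteratedDeriv 4 f x / 24 * t ^ 4 ≤ |t| ^ 4 ∧
      -|t| ^ 4 ≤ f (x + t) - (f x + deriv f x * t + iteratedDeriv 2 f x / 2 * t ^ 2
      + iteratedDeriv 3 f x / 6 * t ^ 3) - iteratedDeriv 4 f x / 24 * t ^ 4 := by
    rw [abs_le] at h
    norm_num at h
    constructor <;> linarith [h.1, h.2]
  linarith [abs_le.2 ⟨e.2, e.1⟩]

/-- Order-3 finite difference formula with shift 2 for the first derivative:
`(1/h)(-(1/6) f(x+2h) + f(x+h) - (1/2) f(x) - (1/3) f(x-h)) = f'(x) + O(h³)`. -/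
theorem fd_first_deriv_order3_shift2 (f : ℝ → ℝ) (hf : ContDiff ℝ 4 f) (x : ℝ) :
    ∃ C > (0 : ℝ), ∃ δ > (0 : ℝ), ∀ h : ℝ, 0 < |h| → |h| < δ →
      |(1 / h) * (-(1 / 6) * f (x + 2 * h) + f (x + h) - (1 / 2) * f x
          - (1 / 3) * f (x - h)) - deriv f x| ≤ C * |h| ^ 3 := by
  obtain ⟨b, c, K, hK, δ, hδ, H⟩ := exists_cubic_taylor_bound f hf x
  -- `4 = 2⁴/6 + 1 + 1/3` is the sum of the absolute fourth moments of the weights.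
  refine ⟨4 * K, by positivity, δ / 2, by positivity, fun h h0 hh => ?_⟩
  have hne : h ≠ 0 := abs_pos.1 h0
  have h2 := H (2 * h) (by rw [abs_mul, abs_two]; linarith)
  have h1 := H h (by linarith)
  have hm := H (-h) (by rw [abs_neg]; linarith)
  rw [abs_mul, abs_two, mul_pow] at h2
  rw [abs_neg, ← sub_eq_add_neg] at hm
  rw [abs_le] at h1 h2 hm
  have e : (1 / h) * (-(1 / 6) * f (x + 2 * h) + f (x + h) - (1 / 2) * f x
      - (1 / 3) * f (x - h)) - deriv f x = (-(1 / 6) * f (x + 2 * h) + f (x + h) - (1 / 2) * f x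
      - (1 / 3) * f (x - h) - deriv f x * h) / h := by
    field_simp
  rw [e, abs_div, div_le_iff₀ h0, abs_le]
  constructor <;> linarith [h1.1, h1.2, h2.1, h2.2, hm.1, hm.2]
end

section
/- Let f : ℝ → ℝ be six times continuously differentiable and let x ∈ ℝ. Then (1/h²)·((1/16) f(x+2h) + (5/12) f(x+h) − (1/18) f(x) − (9/4) f(x−h) + (73/24) f(x−2h) − (59/36) f(x−3h) + (1/2) f(x−4h) − (1/12) f(x−5h) + (1/144) f(x−6h)) = f″(x) + O(h⁴) as h → 0; that is, there exist constants C > 0 and δ > 0 such that for all 0 < |h| < δ the difference between the left-hand expression and f″(x) is bounded in absolute value by C h⁴. -/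
/-!
Write `f (x + t) = P(t) + R(t)`, where `P` is the Taylor polynomial of degree five of `f` at `x`
and `|R(t)| ≤ K t⁶` for small `t` (`taylor_five_bound`). The weights `w_k` at the nodes `2 - k`
have moments `∑ w_k (2 - k)^j` equal to `0` for `j = 0, 1, 3, 4, 5` and to `2` for `j = 2`, so the
formula reproduces `f″(x) h²` exactly on `P`. What is left is a fixed linear combination of nine
values of `R` at multiples of `h`, which is `O(h⁶)`; division by `h²` gives the claim.
-/

/-- Taylor's theorem at order five with an `O(t⁶)` remainder; of the coefficients, only the
quadratic one is identified, as the others cancel in the difference formula. -/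
lemma taylor_five_bound (f : ℝ → ℝ) (hf : ContDiff ℝ 6 f) (x : ℝ) :
    ∃ a b c d e K ε : ℝ, 0 < K ∧ 0 < ε ∧ ∀ t : ℝ, |t| < ε →
      |f (x + t) - (a + b * t + iteratedDeriv 2 f x / 2 * t ^ 2 + c * t ^ 3 + d * t ^ 4
        + e * t ^ 5)| ≤ K * t ^ 6 := by
  have h := (taylor_isLittleO_univ (x₀ := x) (n := 6) (by exact_mod_cast hf)).bound
    (zero_lt_one)
  obtain ⟨ε, hε, H⟩ := Metric.eventually_nhds_iff.1 h
  set D : ℕ → ℝ := fun n => iteratedDeriv n f x with hD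
  refine ⟨D 0, D 1, D 3 / 6, D 4 / 24, D 5 / 120, 1 + |D 6 / 720|, ε, by positivity, hε, ?_⟩
  intro t ht
  have h1 := H (y := x + t) (by simpa [Real.dist_eq] using ht)
  simp only [taylor_within_apply, iteratedDerivWithin_univ, Finset.sum_range_succ,
    Finset.sum_range_zero, Nat.factorial, add_sub_cancel_left, Real.norm_eq_abs, smul_eq_mul,
    one_mul] at h1
  -- The little-o estimate of order six costs one extra term, the sixth Taylor monomial.
  have h6 : |D 6 / 720 * t ^ 6| = |D 6 / 720| * t ^ 6 := by
    rw [abs_mul, abs_of_nonneg (by positivity : (0 : ℝ) ≤ t ^ 6)]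
  rw [abs_of_nonneg (by positivity : (0 : ℝ) ≤ t ^ 6)] at h1
  calc _ = |(f (x + t) - (D 0 + D 1 * t + D 2 / 2 * t ^ 2 + D 3 / 6 * t ^ 3 + D 4 / 24 * t ^ 4
          + D 5 / 120 * t ^ 5 + D 6 / 720 * t ^ 6)) + D 6 / 720 * t ^ 6| := by
        congr 1; ring
    _ ≤ _ := abs_add_le _ _
    _ ≤ t ^ 6 + |D 6 / 720| * t ^ 6 := by
        rw [h6]
        gcongr
        refine le_of_eq_of_le (congrArg abs ?_) h1
        simp only [hD]
        push_cast
        ring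
    _ = _ := by ring

/-- Order-4 nine-point finite difference formula with shift 2 for the second
derivative, coming from `W_{4,2}(z) = (-z⁴/12 + z³/2 - 3z²/2 + 5z/6 + 1/4)²`. -/
theorem fd_second_deriv_order4_shift2 (f : ℝ → ℝ) (hf : ContDiff ℝ 6 f) (x : ℝ) :
    ∃ C > (0 : ℝ), ∃ δ > (0 : ℝ), ∀ h : ℝ, 0 < |h| → |h| < δ →
      |(1 / h ^ 2) * ((1 / 16) * f (x + 2 * h) + (5 / 12) * f (x + h)
          - (1 / 18) * f x - (9 / 4) * f (x - h) + (73 / 24) * f (x - 2 * h)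
          - (59 / 36) * f (x - 3 * h) + (1 / 2) * f (x - 4 * h)
          - (1 / 12) * f (x - 5 * h) + (1 / 144) * f (x - 6 * h))
        - iteratedDeriv 2 f x| ≤ C * h ^ 4 := by
  obtain ⟨a, b, c, d, e, K, ε, hK, hε, H⟩ := taylor_five_bound f hf x
  -- All nodes are `x + m h` with `|m| ≤ 6`, so `|h| < ε / 6` suffices; each remainder is at most
  -- `6⁶ K h⁶`, and the absolute values of the weights sum to less than `9`.
  refine ⟨9 * 6 ^ 6 * K, by positivity, ε / 6, by positivity, fun h h0 hh => ?_⟩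
  have hne : h ≠ 0 := abs_pos.1 h0
  obtain ⟨R, hR⟩ : ∃ R : ℝ → ℝ, ∀ t, f (x + t) = (a + b * t + iteratedDeriv 2 f x / 2 * t ^ 2
      + c * t ^ 3 + d * t ^ 4 + e * t ^ 5) + R t :=
    ⟨fun t => f (x + t) - (a + b * t + iteratedDeriv 2 f x / 2 * t ^ 2
      + c * t ^ 3 + d * t ^ 4 + e * t ^ 5), fun t => by ring⟩
  have hb : ∀ m : ℝ, |m| ≤ 6 → |R (m * h)| ≤ 6 ^ 6 * K * h ^ 6 := by
    intro m hm
    have h1 : |m * h| < ε := by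
      rw [abs_mul]
      nlinarith [abs_nonneg m]
    have h2 := H _ h1
    rw [hR, add_sub_cancel_left] at h2
    have h3 : m ^ 6 ≤ 6 ^ 6 := by
      rw [← Even.pow_abs (by decide : Even 6) m]
      gcongr
    calc _ ≤ _ := h2
      _ = m ^ 6 * (K * h ^ 6) := by ring
      _ ≤ 6 ^ 6 * (K * h ^ 6) := by gcongr
      _ = _ := by ring
  have e0 := hR (0 * h)
  have e1 := hR (1 * h)
  have e2 := hR (2 * h)
  have n1 := hR (-1 * h)
  have n2 := hR (-2 * h)
  have n3 := hR (-3 * h)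
  have n4 := hR (-4 * h)
  have n5 := hR (-5 * h)
  have n6 := hR (-6 * h)
  rw [show x + 0 * h = x by ring] at e0
  rw [show x + 1 * h = x + h by ring] at e1
  rw [show x + -1 * h = x - h by ring] at n1
  rw [show x + -2 * h = x - 2 * h by ring] at n2
  rw [show x + -3 * h = x - 3 * h by ring] at n3
  rw [show x + -4 * h = x - 4 * h by ring] at n4
  rw [show x + -5 * h = x - 5 * h by ring] at n5
  rw [show x + -6 * h = x - 6 * h by ring] at n6
  -- The moment conditions: the polynomial part contributes exactly `f″(x)`.
  have key : (1 / h ^ 2) * ((1 / 16) * f (x + 2 * h) + (5 / 12) * f (x + h)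
          - (1 / 18) * f x - (9 / 4) * f (x - h) + (73 / 24) * f (x - 2 * h)
          - (59 / 36) * f (x - 3 * h) + (1 / 2) * f (x - 4 * h)
          - (1 / 12) * f (x - 5 * h) + (1 / 144) * f (x - 6 * h))
        - iteratedDeriv 2 f x
      = ((1 / 16) * R (2 * h) + (5 / 12) * R (1 * h)
          - (1 / 18) * R (0 * h) - (9 / 4) * R (-1 * h) + (73 / 24) * R (-2 * h)
          - (59 / 36) * R (-3 * h) + (1 / 2) * R (-4 * h)
          - (1 / 12) * R (-5 * h) + (1 / 144) * R (-6 * h)) / h ^ 2 := by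
    rw [eq_div_iff (pow_ne_zero 2 hne), sub_mul, mul_right_comm,
      one_div_mul_cancel (pow_ne_zero 2 hne), one_mul, e0, e1, e2, n1, n2, n3, n4, n5, n6]
    ring
  rw [key, abs_div, abs_of_pos (by positivity : 0 < h ^ 2), div_le_iff₀ (by positivity)]
  have b0 := abs_le.1 (hb 0 (by norm_num))
  have b1 := abs_le.1 (hb 1 (by norm_num))
  have b2 := abs_le.1 (hb 2 (by norm_num))
  have c1 := abs_le.1 (hb (-1) (by norm_num))
  have c2 := abs_le.1 (hb (-2) (by norm_num))
  have c3 := abs_le.1 (hb (-3) (by norm_num))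
  have c4 := abs_le.1 (hb (-4) (by norm_num))
  have c5 := abs_le.1 (hb (-5) (by norm_num))
  have c6 := abs_le.1 (hb (-6) (by norm_num))
  have hpos : 0 ≤ 6 ^ 6 * K * h ^ 6 := by positivity
  rw [show 9 * 6 ^ 6 * K * h ^ 4 * h ^ 2 = 9 * (6 ^ 6 * K * h ^ 6) by ring]
  generalize 6 ^ 6 * K * h ^ 6 = M at *
  rw [abs_le]
  constructor <;> linarith [b0.1, b0.2, b1.1, b1.2, b2.1, b2.2, c1.1, c1.2, c2.1, c2.2, c3.1,
    c3.2, c4.1, c4.2, c5.1, c5.2, c6.1, c6.2]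
end
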